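/- A non-polynomial homogeneous contact form of weight zero on the cylinder: let U = {(z, p, q) ∈ ℝ³ : p² + q² < 1} and let α be the smooth 1-form α = dz − p·(2 + sin(pq)) dq on U (components (α_z, α_p, α_q) = (1, 0, −p(2 + sin(pq)))). Then: (i) α is a contact form on U; concretely, dα = −(2 + sin(pq) + pq·cos(pq)) dp ∧ dq, the scalar 2 + sin(pq) + pq·cos(pq) is strictly positive at every point of U (so at every point the flat map v ↦ dα(v,·) has rank 2 and α is not in its image); and (ii) α is homogeneous of weight 0 with respect to the diagonal weight vector field ∇ = p∂_p − q∂_q, i.e., assigning weights (0, 1, −1) to the coordinates (z, p, q). -/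

import Mathlib

/-- The exterior derivative of the 1-form `α` at `x`, as a bilinear "flat" map:
`flat α x u v = dα_x(u, v) = (Dα(x)u)(v) − (Dα(x)v)(u)`. -/
noncomputable def flat {n : ℕ} (α : (Fin n → ℝ) → (Fin n → ℝ) →L[ℝ] ℝ)
    (x : Fin n → ℝ) : (Fin n → ℝ) →L[ℝ] (Fin n → ℝ) →L[ℝ] ℝ :=
  fderiv ℝ α x - (fderiv ℝ α x).flip

/-- The 1-form `α = dz − p(2 + sin(pq)) dq` on `ℝ³` with coordinates
`(z, p, q) = (x 0, x 1, x 2)`. -/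
noncomputable def alphaC (x : Fin 3 → ℝ) : (Fin 3 → ℝ) →L[ℝ] ℝ :=
  ContinuousLinearMap.proj (R := ℝ) (φ := fun _ : Fin 3 => ℝ) 0
    - (x 1 * (2 + Real.sin (x 1 * x 2))) •
        ContinuousLinearMap.proj (R := ℝ) (φ := fun _ : Fin 3 => ℝ) 2

lemma alphaC_fderiv (x u v : Fin 3 → ℝ) : fderiv ℝ alphaC x u v =
    -((2 + Real.sin (x 1 * x 2) + x 1 * x 2 * Real.cos (x 1 * x 2)) * u 1
      + x 1 * x 1 * Real.cos (x 1 * x 2) * u 2) * v 2 := by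
  have h1 : HasFDerivAt (fun y : Fin 3 → ℝ => y 1)
    (ContinuousLinearMap.proj (R := ℝ) (φ := fun _ : Fin 3 => ℝ) 1) x := hasFDerivAt_apply 1 x
  have h2 : HasFDerivAt (fun y : Fin 3 → ℝ => y 2)
    (ContinuousLinearMap.proj (R := ℝ) (φ := fun _ : Fin 3 => ℝ) 2) x := hasFDerivAt_apply 2 x
  have h3 := h1.mul (((h1.mul h2).sin).const_add 2)
  have h4 := (h3.smul_const (ContinuousLinearMap.proj (R := ℝ) (φ := fun _ : Fin 3 => ℝ) 2)).const_sub
    (ContinuousLinearMap.proj (R := ℝ) (φ := fun _ : Fin 3 => ℝ) 0)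
  have h5 : HasFDerivAt alphaC _ x := h4
  rw [h5.fderiv]
  simp
  ring

/-- On the cylinder `U = {(z,p,q) : p² + q² < 1} ⊆ ℝ³`, the 1-form
`α = dz − p(2 + sin(pq)) dq` is a contact form: its differential is
`dα = −(2 + sin(pq) + pq cos(pq)) dp ∧ dq` with the scalar factor strictly positive,
the flat map has rank `2` with `α` not in its image; moreover `α` is homogeneous of
weight `0` with respect to `∇ = p∂_p − q∂_q`, i.e. for weights `(0, 1, −1)` of
`(z, p, q)`. -/
theorem stmt_19 :
    ∀ x : Fin 3 → ℝ, (x 1) ^ 2 + (x 2) ^ 2 < 1 →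
      (0 < 2 + Real.sin (x 1 * x 2) + x 1 * x 2 * Real.cos (x 1 * x 2)) ∧
      (∀ u v : Fin 3 → ℝ, flat alphaC x u v =
        -(2 + Real.sin (x 1 * x 2) + x 1 * x 2 * Real.cos (x 1 * x 2))
          * (u 1 * v 2 - u 2 * v 1)) ∧
      Module.finrank ℝ (LinearMap.range (flat alphaC x).toLinearMap) = 2 ∧
      alphaC x ∉ Set.range (fun v => flat alphaC x v) ∧
      (∀ v : Fin 3 → ℝ,
        fderiv ℝ alphaC x (fun j => ![(0:ℝ), 1, -1] j * x j) v
          + alphaC x (fun j => ![(0:ℝ), 1, -1] j * v j) = 0) := by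
  intro x hx
  have hpos : 0 < 2 + Real.sin (x 1 * x 2) + x 1 * x 2 * Real.cos (x 1 * x 2) := by
    have hs := Real.neg_one_le_sin (x 1 * x 2)
    have hc : |x 1 * x 2 * Real.cos (x 1 * x 2)| ≤ |x 1 * x 2| := by
      rw [abs_mul (x 1 * x 2)]
      exact mul_le_of_le_one_right (abs_nonneg _) (Real.abs_cos_le_one _)
    have hp : |x 1 * x 2| < 1 := by
      rw [abs_lt]
      constructor <;> nlinarith [sq_nonneg (x 1 + x 2), sq_nonneg (x 1 - x 2)]
    have := neg_abs_le (x 1 * x 2 * Real.cos (x 1 * x 2))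
    linarith
  have hflat : ∀ u v : Fin 3 → ℝ, flat alphaC x u v =
        -(2 + Real.sin (x 1 * x 2) + x 1 * x 2 * Real.cos (x 1 * x 2))
          * (u 1 * v 2 - u 2 * v 1) := by
    intro u v
    simp only [flat, sub_apply, ContinuousLinearMap.flip_apply, alphaC_fderiv]
    ring
  refine ⟨hpos, hflat, ?_, ?_, ?_⟩
  · have hk : LinearMap.ker (flat alphaC x).toLinearMap
        = Submodule.span ℝ {(Pi.single 0 1 : Fin 3 → ℝ)} := by
      ext u
      rw [Submodule.mem_span_singleton, LinearMap.mem_ker]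
      constructor
      · intro h
        have h' : flat alphaC x u = 0 := h
        have e1 := hflat u (Pi.single 1 1)
        have e2 := hflat u (Pi.single 2 1)
        rw [h'] at e1 e2
        simp [hpos.ne'] at e1 e2
        have f1 : u 2 = 0 := by
          rcases e1 with e | e
          · linarith
          · exact e
        have f2 : u 1 = 0 := by
          rcases e2 with e | e
          · linarith
          · exact e
        refine ⟨u 0, ?_⟩
        ext i
        fin_cases i <;> simp [f1, f2]
      · rintro ⟨c, rfl⟩
        change flat alphaC x (c • Pi.single 0 1) = 0
        ext1 v
        rw [hflat]
        simp
    have hr := LinearMap.finrank_range_add_finrank_ker (flat alphaC x).toLinearMap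
    rw [hk, finrank_span_singleton (by simp)] at hr
    simp at hr
    exact hr
  · rintro ⟨v, hv⟩
    have h := congrArg (fun L : (Fin 3 → ℝ) →L[ℝ] ℝ => L (Pi.single 0 1)) hv
    simp only [hflat] at h
    simp [alphaC] at h
  · intro v
    rw [alphaC_fderiv]
    simp [alphaC]
    ring
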